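/- Consider the (𝒟, γ, n)-stochastic ball model with k = 2 clusters, centers γ₁, γ₂ ∈ ℝ^m, and Δ := ‖γ₁ − γ₂‖₂ > 2. Suppose Δ is such that there exist c′ > 0 and n₀′ with: for all n ≥ n₀′, with probability at least 1 − e^{−c′n}, the planted partition is the unique minimizer of the 2-means objective over all partitions of the N = 2n points into two clusters. Then there exist c > 0 and n₀ such that for all n ≥ n₀, with probability at least 1 − e^{−cn}, the following holds: for every leading eigenvector y of Φ₀ᵀΦ₀ (Φ₀ the centered data matrix), the planted partition equals some threshold partition ({i : y_i < θ}, {i : y_i ≥ θ}) of y, and it is the unique minimizer of the 2-means objective among all threshold partitions of y; that is, spectral k-means clustering recovers the planted clusters. -/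

import Mathlib

open scoped BigOperators ENNReal RealInnerProductSpace
open Matrix MeasureTheory Finset

namespace Stmt11

variable {m : ℕ} {ι : Type*} [Fintype ι] [DecidableEq ι]

/-- The mean of the points of `x` indexed by the finset `S`. -/
noncomputable def clusterMean (x : ι → EuclideanSpace ℝ (Fin m)) (S : Finset ι) :
    EuclideanSpace ℝ (Fin m) :=
  ((S.card : ℝ))⁻¹ • ∑ i ∈ S, x i

/-- The 2-means objective of the partition `(S, Sᶜ)` of the points `x`. -/
noncomputable def twoMeansObj (x : ι → EuclideanSpace ℝ (Fin m)) (S : Finset ι) : ℝ :=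
  (∑ i ∈ S, ‖x i - clusterMean x S‖ ^ 2) + ∑ i ∈ Sᶜ, ‖x i - clusterMean x Sᶜ‖ ^ 2

/-- The centroid of all the points. -/
noncomputable def centroid (x : ι → EuclideanSpace ℝ (Fin m)) :
    EuclideanSpace ℝ (Fin m) :=
  ((Fintype.card ι : ℝ))⁻¹ • ∑ i, x i

/-- The Gram matrix `Φ₀ᵀΦ₀` of the centered data:
`(Φ₀ᵀΦ₀)_{pq} = ⟪x_p − μ, x_q − μ⟫`. -/
noncomputable def gram (x : ι → EuclideanSpace ℝ (Fin m)) : Matrix ι ι ℝ :=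
  fun p q => ⟪x p - centroid x, x q - centroid x⟫

/-- `y` is a leading eigenvector of the symmetric matrix `G`: a nonzero eigenvector
whose eigenvalue has the largest magnitude among all eigenvalues of `G`. -/
def LeadingEigenvector (G : Matrix ι ι ℝ) (y : ι → ℝ) : Prop :=
  y ≠ 0 ∧ ∃ lam : ℝ, G *ᵥ y = lam • y ∧
    ∀ (y' : ι → ℝ) (lam' : ℝ), y' ≠ 0 → G *ᵥ y' = lam' • y' → |lam'| ≤ |lam|

/-- The planted partition for the two-cluster stochastic ball model: the first cluster. -/
def planted (n : ℕ) : Finset (Fin 2 × Fin n) :=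
  Finset.univ.filter (fun p => p.1 = 0)

/-- Spectral 2-means clustering succeeds on the points `x`: for every leading
eigenvector `y` of `Φ₀ᵀΦ₀`, the planted partition is a threshold partition of `y` and
is the unique minimizer of the 2-means objective among threshold partitions of `y`. -/
noncomputable def SpectralRecovers (n : ℕ) (x : Fin 2 × Fin n → EuclideanSpace ℝ (Fin m)) :
    Prop :=
  ∀ y : Fin 2 × Fin n → ℝ, LeadingEigenvector (gram x) y →
    (∃ θ : ℝ, planted n = Finset.univ.filter (fun i => y i < θ) ∨
      planted n = (Finset.univ.filter (fun i => y i < θ))ᶜ) ∧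
    (∀ θ : ℝ, Finset.univ.filter (fun i => y i < θ) ≠ planted n →
      Finset.univ.filter (fun i => y i < θ) ≠ (planted n)ᶜ →
      twoMeansObj x (planted n) < twoMeansObj x (Finset.univ.filter (fun i => y i < θ)))

end Stmt11

open Stmt11

/-!
For every unit vector `z`, the variance of the data along `z` is the average variance of the two
noise samples along `z` plus `(⟪γ 0 - γ 1, z⟫ / 2) ^ 2`, up to fluctuations. By concentration, the
first term is close to the variance of `𝒟` along `z`, which by rotation invariance is no larger than
along `γ 0 - γ 1`. A principal direction `z` does at least as well as the direction of `γ 0 - γ 1`,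
so `|⟪γ 0 - γ 1, z⟫|` is close to `Δ`, in particular larger than `2`, and the projections of the two
unit balls to the line spanned by `z` are disjoint. Up to a positive factor, a leading eigenvector
of the Gram matrix lists the coordinates of the centered data along such a `z`, so it has the
planted partition as a threshold partition. Minimality among threshold partitions is inherited from
minimality among all partitions.
-/

open ProbabilityTheory Asymptotics Filter

/-! ### Leading eigenvectors of Gram matrices -/

theorem dotProduct_mulVec_le_of_forall_eigenvalue_le {ι : Type*} [Fintype ι]
    {G : Matrix ι ι ℝ} (hG : G.IsHermitian) {L : ℝ}
    (hL : ∀ (v : ι → ℝ) (l : ℝ), v ≠ 0 → G *ᵥ v = l • v → l ≤ L) (c : ι → ℝ) :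
    c ⬝ᵥ G *ᵥ c ≤ L * (c ⬝ᵥ c) := by
  classical
  have hA : (L • (1 : Matrix ι ι ℝ) - G).IsHermitian :=
    (isHermitian_one.smul (IsSelfAdjoint.all L)).sub hG
  have hpos : (L • (1 : Matrix ι ι ℝ) - G).PosSemidef := by
    refine hA.posSemidef_iff_eigenvalues_nonneg.2 fun i => ?_
    have heig := hA.mulVec_eigenvectorBasis i
    rw [sub_mulVec, smul_mulVec, one_mulVec, sub_eq_iff_eq_add', ← sub_eq_iff_eq_add,
      ← sub_smul] at heig
    have hne : (hA.eigenvectorBasis i).ofLp ≠ 0 :=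
      (WithLp.ofLp_eq_zero 2).not.2 (hA.eigenvectorBasis.orthonormal.ne_zero i)
    simpa using hL _ _ hne heig.symm
  have := hpos.dotProduct_mulVec_nonneg c
  simp only [star_trivial, sub_mulVec, smul_mulVec, one_mulVec, dotProduct_sub, dotProduct_smul,
    smul_eq_mul] at this
  linarith

section GramMatrix

variable {ι E : Type*} [Fintype ι] [NormedAddCommGroup E] [InnerProductSpace ℝ E] {u : ι → E}

theorem gram_mulVec_apply (u : ι → E) (c : ι → ℝ) (i : ι) :
    (Matrix.gram ℝ u *ᵥ c) i = ⟪u i, ∑ j, c j • u j⟫ := by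
  simp only [mulVec, dotProduct, gram_apply, inner_sum, inner_smul_right, mul_comm]

theorem dotProduct_gram_mulVec_self (u : ι → E) (c : ι → ℝ) :
    c ⬝ᵥ Matrix.gram ℝ u *ᵥ c = ‖∑ i, c i • u i‖ ^ 2 := by
  simpa using star_dotProduct_gram_mulVec (𝕜 := ℝ) u c c

-- `UᵀU ≤ L` implies `UUᵀ ≤ L`: apply the hypothesis to the coefficients `c i = ⟪u i, w⟫`.
theorem sum_sq_inner_le_of_norm_sum_smul_sq_le {L : ℝ} (hL₀ : 0 ≤ L)
    (hL : ∀ c : ι → ℝ, ‖∑ i, c i • u i‖ ^ 2 ≤ L * ∑ i, c i ^ 2) (w : E) :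
    ∑ i, ⟪u i, w⟫ ^ 2 ≤ L * ‖w‖ ^ 2 := by
  set S := ∑ i, ⟪u i, w⟫ ^ 2 with hS
  have hS_nonneg : 0 ≤ S := by positivity
  have hS_le : S ≤ ‖∑ i, ⟪u i, w⟫ • u i‖ * ‖w‖ := by
    refine le_trans (le_of_eq ?_) (real_inner_le_norm _ _)
    simp [hS, sum_inner, inner_smul_left, sq]
  have hS_sq : S * S ≤ S * (L * ‖w‖ ^ 2) :=
    calc S * S ≤ (‖∑ i, ⟪u i, w⟫ • u i‖ * ‖w‖) * (‖∑ i, ⟪u i, w⟫ • u i‖ * ‖w‖) :=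
          mul_self_le_mul_self hS_nonneg hS_le
      _ = ‖∑ i, ⟪u i, w⟫ • u i‖ ^ 2 * ‖w‖ ^ 2 := by ring
      _ ≤ L * S * ‖w‖ ^ 2 := by gcongr; exact hL _
      _ = S * (L * ‖w‖ ^ 2) := by ring
  rcases hS_nonneg.eq_or_lt with h0 | h0
  · rw [← h0]
    positivity
  · exact le_of_mul_le_mul_left hS_sq h0

theorem exists_eigenvalue_of_leadingEigenvector_gram {y : ι → ℝ}
    (hy : LeadingEigenvector (Matrix.gram ℝ u) y) :
    ∃ L : ℝ, 0 ≤ L ∧ Matrix.gram ℝ u *ᵥ y = L • y ∧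
      ∀ c : ι → ℝ, ‖∑ i, c i • u i‖ ^ 2 ≤ L * ∑ i, c i ^ 2 := by
  obtain ⟨hy0, L, heig, hmax⟩ := hy
  have hL : 0 ≤ L := by
    have hy_pos : 0 < y ⬝ᵥ y := by simpa using dotProduct_star_self_pos_iff.2 hy0
    have := dotProduct_gram_mulVec_self u y
    rw [heig, dotProduct_smul, smul_eq_mul] at this
    exact nonneg_of_mul_nonneg_left (this ▸ sq_nonneg _) hy_pos
  refine ⟨L, hL, heig, fun c => ?_⟩
  rw [← dotProduct_gram_mulVec_self]
  simp_rw [sq]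
  refine dotProduct_mulVec_le_of_forall_eigenvalue_le (isHermitian_gram ℝ u) (fun v l hv hl => ?_) c
  exact (le_abs_self l).trans ((hmax v l hv hl).trans_eq (abs_of_nonneg hL))

theorem exists_forall_sum_sq_inner_le_of_leadingEigenvector_gram (hu : u ≠ 0) {y : ι → ℝ}
    (hy : LeadingEigenvector (Matrix.gram ℝ u) y) :
    ∃ z : E, ‖z‖ = 1 ∧ (∀ w, ‖w‖ = 1 → ∑ i, ⟪u i, w⟫ ^ 2 ≤ ∑ i, ⟪u i, z⟫ ^ 2) ∧
      ∃ l : ℝ, 0 < l ∧ ∀ i, l * y i = ⟪u i, z⟫ := by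
  obtain ⟨L, hL₀, heig, hgram⟩ := exists_eigenvalue_of_leadingEigenvector_gram hy
  have hscatter := sum_sq_inner_le_of_norm_sum_smul_sq_le hL₀ hgram
  have hL : 0 < L := by
    obtain ⟨i, hi⟩ := Function.ne_iff.1 hu
    have hpos : 0 < ∑ j, ⟪u j, u i⟫ ^ 2 :=
      sum_pos' (fun _ _ => sq_nonneg _) ⟨i, mem_univ i, pow_pos (real_inner_self_pos.2 hi) 2⟩
    exact pos_of_mul_pos_left (hpos.trans_le (hscatter (u i))) (sq_nonneg _)
  set Z := ∑ i, y i • u i with hZ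
  have hZ_inner (i : ι) : ⟪u i, Z⟫ = L * y i := by
    simpa [heig] using (gram_mulVec_apply u y i).symm
  have hZ_norm_sq : ‖Z‖ ^ 2 = L * ∑ i, y i ^ 2 := by
    rw [hZ, ← dotProduct_gram_mulVec_self, heig]
    simp [dotProduct, sq, mul_sum, mul_left_comm]
  have hZ_pos : 0 < ‖Z‖ := by
    obtain ⟨i, hi⟩ := Function.ne_iff.1 hy.1
    refine norm_pos_iff.2 fun h => hi ?_
    simpa [h, hL.ne'] using hZ_inner i
  refine ⟨‖Z‖⁻¹ • Z, by simp [norm_smul, hZ_pos.ne'], fun w hw => ?_, L * ‖Z‖⁻¹, by positivity,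
    fun i => by rw [inner_smul_right, hZ_inner]; ring⟩
  calc ∑ i, ⟪u i, w⟫ ^ 2 ≤ L := by simpa [hw] using hscatter w
    _ = (‖Z‖ ^ 2)⁻¹ * (L * (L * ∑ i, y i ^ 2)) := by
      rw [← hZ_norm_sq]
      field_simp
    _ = ∑ i, ⟪u i, ‖Z‖⁻¹ • Z⟫ ^ 2 := by
      simp_rw [inner_smul_right, hZ_inner, mul_sum]
      exact sum_congr rfl fun i _ => by ring

end GramMatrix

/-! ### Empirical variance and principal directions -/

/-- The variance of a finite sample `f`, normalized by the number of points. -/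
noncomputable def empVar {ι : Type*} [Fintype ι] (f : ι → ℝ) : ℝ :=
  𝔼 i, (f i - 𝔼 j, f j) ^ 2

section EmpVar

variable {ι κ : Type*} [Fintype ι] [Fintype κ]

theorem empVar_eq_expect_sq_sub_sq_expect (f : ι → ℝ) :
    empVar f = 𝔼 i, f i ^ 2 - (𝔼 i, f i) ^ 2 := by
  rcases isEmpty_or_nonempty ι with _ | _
  · simp [empVar]
  · simp only [empVar, sub_sq, expect_add_distrib, expect_sub_distrib, Fintype.expect_const,
      ← expect_mul, ← mul_expect]
    ring

theorem empVar_const_add (c : ℝ) (f : ι → ℝ) : empVar (fun i => c + f i) = empVar f := by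
  rcases isEmpty_or_nonempty ι with _ | _
  · simp [empVar]
  · simp [empVar, expect_add_distrib]

theorem empVar_prod (f : ι × κ → ℝ) :
    empVar f = 𝔼 i, empVar (fun k => f (i, k)) + empVar (fun i => 𝔼 k, f (i, k)) := by
  simp only [empVar_eq_expect_sq_sub_sq_expect, expect_sub_distrib, ← univ_product_univ,
    expect_product]
  ring

theorem empVar_fin_two (f : Fin 2 → ℝ) : empVar f = ((f 0 - f 1) / 2) ^ 2 := by
  simp only [empVar, Fintype.expect_eq_sum_div_card, Fin.sum_univ_two, Fintype.card_fin]
  push_cast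
  ring

end EmpVar

/-- `z` is a (first) principal direction of the points `x`: among all unit vectors, it maximizes
the empirical variance of the projections of the points. -/
def IsPrincipalDirection {ι E : Type*} [Fintype ι] [NormedAddCommGroup E] [InnerProductSpace ℝ E]
    (x : ι → E) (z : E) : Prop :=
  ‖z‖ = 1 ∧ ∀ w, ‖w‖ = 1 → empVar (fun i => ⟪x i, w⟫) ≤ empVar (fun i => ⟪x i, z⟫)

section Centroid

variable {m : ℕ} {ι : Type*} [Fintype ι]

theorem inner_centroid (x : ι → EuclideanSpace ℝ (Fin m)) (w : EuclideanSpace ℝ (Fin m)) :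
    ⟪Stmt11.centroid x, w⟫ = 𝔼 i, ⟪x i, w⟫ := by
  rw [Stmt11.centroid, real_inner_smul_left, sum_inner, Fintype.expect_eq_sum_div_card,
    div_eq_inv_mul]

theorem empVar_inner (x : ι → EuclideanSpace ℝ (Fin m)) (w : EuclideanSpace ℝ (Fin m)) :
    empVar (fun i => ⟪x i, w⟫) = (∑ i, ⟪x i - centroid x, w⟫ ^ 2) / Fintype.card ι := by
  simp only [empVar, inner_sub_left, inner_centroid, Fintype.expect_eq_sum_div_card]

theorem exists_isPrincipalDirection_of_leadingEigenvector {x : ι → EuclideanSpace ℝ (Fin m)}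
    (hx : ∃ i j, x i ≠ x j) {y : ι → ℝ} (hy : LeadingEigenvector (Stmt11.gram x) y) :
    ∃ z, IsPrincipalDirection x z ∧ ∃ l : ℝ, 0 < l ∧ ∀ i, l * y i = ⟪x i - centroid x, z⟫ := by
  have hu : (fun i => x i - centroid x) ≠ 0 := by
    rintro h
    obtain ⟨i, j, hij⟩ := hx
    exact hij ((sub_eq_zero.1 (congrFun h i)).trans (sub_eq_zero.1 (congrFun h j)).symm)
  obtain ⟨z, hz, hmax, hyz⟩ := exists_forall_sum_sq_inner_le_of_leadingEigenvector_gram hu hy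
  refine ⟨z, ⟨hz, fun w hw => ?_⟩, hyz⟩
  rw [empVar_inner, empVar_inner]
  exact div_le_div_of_nonneg_right (hmax w hw) (Nat.cast_nonneg _)

end Centroid

/-! ### Threshold partitions -/

/-- The set of indices `S` is one of the two parts of a threshold partition of `y`. -/
def IsThresholdPart {ι : Type*} [Fintype ι] [DecidableEq ι] (y : ι → ℝ) (S : Finset ι) : Prop :=
  ∃ θ : ℝ, S = univ.filter (fun i => y i < θ) ∨ S = (univ.filter (fun i => y i < θ))ᶜ

section Threshold

variable {ι : Type*} [Fintype ι] [DecidableEq ι] {y y' : ι → ℝ} {S : Finset ι}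

theorem IsThresholdPart.of_mul_eq_sub (h : IsThresholdPart y' S) {l b : ℝ} (hl : 0 < l)
    (hy : ∀ i, l * y i = y' i - b) : IsThresholdPart y S := by
  obtain ⟨θ, hθ⟩ := h
  have hiff (i : ι) : y i < (θ - b) / l ↔ y' i < θ := by
    rw [lt_div_iff₀' hl, hy, sub_lt_sub_iff_right]
  exact ⟨(θ - b) / l, by simpa only [hiff] using hθ⟩

theorem isThresholdPart_of_separated_below {θ : ℝ} (hS : ∀ i ∈ S, y i < θ)
    (hSc : ∀ i ∉ S, θ < y i) : IsThresholdPart y S := by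
  refine ⟨θ, Or.inl ?_⟩
  ext i
  simpa using ⟨hS i, fun h => by_contra fun hi => (hSc i hi).not_gt h⟩

theorem isThresholdPart_of_separated_above {θ : ℝ} (hS : ∀ i ∈ S, θ < y i)
    (hSc : ∀ i ∉ S, y i < θ) : IsThresholdPart y S := by
  refine ⟨θ, Or.inr ?_⟩
  ext i
  simpa using ⟨fun hi => (hS i hi).le, fun h => by_contra fun hi => (hSc i hi).not_ge h⟩

end Threshold

/-! ### Events of exponentially small probability -/

section ExpUnlikely

variable {Ω : ℕ → Type*} [∀ n, MeasurableSpace (Ω n)]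

/-- The events `A n` have probability `1 - e^{-Ω(n)}`. -/
def HoldsWithExpHighProb (P : ∀ n, Measure (Ω n)) (A : ∀ n, Set (Ω n)) : Prop :=
  ∃ c : ℝ, 0 < c ∧ ∃ n₀ : ℕ, ∀ n : ℕ, n₀ ≤ n → ENNReal.ofReal (1 - Real.exp (-c * n)) ≤ P n (A n)

/-- The events `B n` have probability `e^{-Ω(n)}`. -/
def ExpUnlikely (P : ∀ n, Measure (Ω n)) (B : ∀ n, Set (Ω n)) : Prop :=
  ∃ c : ℝ, 0 < c ∧ (fun n => (P n).real (B n)) =O[atTop] fun n : ℕ => Real.exp (-c * n)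

theorem isLittleO_exp_neg_mul_natCast {c c' : ℝ} (h : c < c') :
    (fun n : ℕ => Real.exp (-c' * n)) =o[atTop] fun n : ℕ => Real.exp (-c * n) := by
  rw [Real.isLittleO_exp_comp_exp_comp]
  simp_rw [← sub_mul]
  exact tendsto_natCast_atTop_atTop.const_mul_atTop (by linarith)

variable {P : ∀ n, Measure (Ω n)} {A B B' C : ∀ n, Set (Ω n)}

theorem expUnlikely_of_measure_eq_zero (h : ∀ n, P n (B n) = 0) : ExpUnlikely P B :=
  ⟨1, one_pos, by simp [measureReal_def, h, isBigO_zero]⟩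

theorem ExpUnlikely.union (hB : ExpUnlikely P B) (hB' : ExpUnlikely P B') :
    ExpUnlikely P fun n => B n ∪ B' n := by
  obtain ⟨c, hc, hO⟩ := hB
  obtain ⟨c', hc', hO'⟩ := hB'
  have hlt : min c c' / 2 < min c c' := half_lt_self (lt_min hc hc')
  refine ⟨min c c' / 2, half_pos (lt_min hc hc'), IsBigO.trans (IsBigO.of_bound 1 ?_)
    ((hO.trans_isLittleO (isLittleO_exp_neg_mul_natCast (hlt.trans_le (min_le_left _ _)))).add
      (hO'.trans_isLittleO
        (isLittleO_exp_neg_mul_natCast (hlt.trans_le (min_le_right _ _))))).isBigO⟩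
  filter_upwards with n
  rw [one_mul, Real.norm_of_nonneg measureReal_nonneg]
  exact (measureReal_union_le _ _).trans (le_abs_self _)

theorem ExpUnlikely.iUnion {τ : Type*} [Finite τ] {B : τ → ∀ n, Set (Ω n)}
    (hB : ∀ t, ExpUnlikely P (B t)) : ExpUnlikely P fun n => ⋃ t, B t n := by
  classical
  have := Fintype.ofFinite τ
  suffices h : ∀ s : Finset τ, ExpUnlikely P fun n => ⋃ t ∈ s, B t n by simpa using h univ
  intro s
  induction s using Finset.induction_on with
  | empty => exact expUnlikely_of_measure_eq_zero (by simp)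
  | insert t s _ ih => simpa only [set_biUnion_insert] using (hB t).union ih

variable [∀ n, IsFiniteMeasure (P n)]

theorem ExpUnlikely.mono (hB : ExpUnlikely P B) (h : ∀ᶠ n in atTop, B' n ⊆ B n) :
    ExpUnlikely P B' := by
  obtain ⟨c, hc, hO⟩ := hB
  refine ⟨c, hc, IsBigO.trans (IsBigO.of_bound 1 ?_) hO⟩
  filter_upwards [h] with n hn
  simpa [abs_of_nonneg measureReal_nonneg] using measureReal_mono (μ := P n) hn

theorem HoldsWithExpHighProb.of_subset_union (hA : HoldsWithExpHighProb P A)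
    (hB : ExpUnlikely P B) (h : ∀ᶠ n in atTop, A n ⊆ C n ∪ B n) : HoldsWithExpHighProb P C := by
  obtain ⟨c, hc, n₀, hA⟩ := hA
  obtain ⟨c', hc', hO⟩ := hB
  have hlt : min c c' / 2 < min c c' := half_lt_self (lt_min hc hc')
  have hsmall := (isLittleO_exp_neg_mul_natCast (hlt.trans_le (min_le_left _ _))).add
    (hO.trans_isLittleO (isLittleO_exp_neg_mul_natCast (hlt.trans_le (min_le_right _ _))))
  obtain ⟨n₁, hn₁⟩ := eventually_atTop.1 ((hsmall.bound one_pos).and h)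
  refine ⟨min c c' / 2, half_pos (lt_min hc hc'), max n₀ n₁, fun n hn => ?_⟩
  obtain ⟨hbound, hsub⟩ := hn₁ n (le_of_max_le_right hn)
  rw [one_mul, Real.norm_eq_abs, Real.norm_of_nonneg (Real.exp_nonneg _)] at hbound
  have hAn := hA n (le_of_max_le_left hn)
  rw [ENNReal.ofReal_le_iff_le_toReal (by simp)] at hAn ⊢
  have hunion : (P n).real (A n) ≤ (P n).real (C n) + (P n).real (B n) :=
    (measureReal_mono hsub).trans (measureReal_union_le _ _)
  simp only [measureReal_def] at hunion hbound
  linarith [le_abs_self (Real.exp (-c * n) + ((P n) (B n)).toReal)]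

end ExpUnlikely

/-! ### Concentration of averages -/

theorem measureReal_lt_abs_expect_sub_integral_le {Ω κ : Type*} [MeasurableSpace Ω] [Fintype κ]
    [Nonempty κ] {P : Measure Ω} [IsProbabilityMeasure P] {Y : κ → Ω → ℝ} (hindep : iIndepFun Y P)
    (hmeas : ∀ k, AEMeasurable (Y k) P) (hY : ∀ k, ∀ᵐ ω ∂P, |Y k ω| ≤ 1) {δ : ℝ} (hδ : 0 ≤ δ) :
    P.real {ω | δ < |𝔼 k, (Y k ω - P[Y k])|} ≤
      2 * Real.exp (-(δ ^ 2 / 2) * Fintype.card κ) := by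
  have hcard : (0 : ℝ) < Fintype.card κ := by exact_mod_cast Fintype.card_pos
  have hsum : HasSubgaussianMGF (fun ω => ∑ k, (Y k ω - P[Y k])) (Fintype.card κ) P := by
    have hsub (k : κ) : HasSubgaussianMGF (fun ω => Y k ω - P[Y k]) 1 P := by
      convert hasSubgaussianMGF_of_mem_Icc (hmeas k) ((hY k).mono fun ω h => abs_le.1 h) using 1
      norm_num
    have hindep' : iIndepFun (fun k ω => Y k ω - P[Y k]) P :=
      hindep.comp (fun k x => x - ∫ ω, Y k ω ∂P) fun _ => measurable_id.sub_const _
    simpa using HasSubgaussianMGF.sum_of_iIndepFun (s := univ) hindep' fun k _ => hsub k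
  have hε : 0 ≤ δ * Fintype.card κ := by positivity
  have hexp : -(δ * Fintype.card κ) ^ 2 / (2 * Fintype.card κ) =
      -(δ ^ 2 / 2) * Fintype.card κ := by
    field_simp
  have hsub : {ω | δ < |𝔼 k, (Y k ω - P[Y k])|} ⊆
      {ω | δ * Fintype.card κ ≤ ∑ k, (Y k ω - P[Y k])} ∪
        {ω | δ * Fintype.card κ ≤ -∑ k, (Y k ω - P[Y k])} := by
    intro ω hω
    rw [Set.mem_ofPred_eq, Fintype.expect_eq_sum_div_card, abs_div, Nat.abs_cast,
      lt_div_iff₀ hcard] at hω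
    exact le_abs.1 hω.le
  refine (measureReal_mono hsub).trans ((measureReal_union_le _ _).trans ?_)
  rw [two_mul, ← hexp]
  exact add_le_add (hsum.measure_ge_le hε) (hsum.neg.measure_ge_le hε)

/-- The law of the noise vectors `r_{a,i}`, with `a : ι` and `i : Fin n`, of the stochastic ball
model: they are i.i.d. with law `𝒟`. -/
noncomputable abbrev noiseLaw (ι : Type*) [Fintype ι] {𝓧 : Type*} [MeasurableSpace 𝓧]
    (𝒟 : Measure 𝓧) (n : ℕ) : Measure (ι × Fin n → 𝓧) :=
  Measure.pi fun _ => 𝒟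

section Concentration

variable {ι 𝓧 : Type*} [Fintype ι] [MeasurableSpace 𝓧] {𝒟 : Measure 𝓧}

theorem abs_expect_sum_sub_integral_sum_le {τ κ : Type*} [Fintype τ] [Fintype κ] {f : τ → 𝓧 → ℝ}
    (hf : ∀ t, Integrable (f t) 𝒟) {c : τ → ℝ} (hc : ∀ t, |c t| ≤ 1) {r : κ → 𝓧} {δ : ℝ}
    (hr : ∀ t, |𝔼 i, f t (r i) - ∫ x, f t x ∂𝒟| ≤ δ) :
    |𝔼 i, ∑ t, c t * f t (r i) - ∫ x, ∑ t, c t * f t x ∂𝒟| ≤ Fintype.card τ * δ := by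
  rw [integral_finsetSum _ fun t _ => (hf t).const_mul (c t), expect_sum_comm,
    ← sum_sub_distrib]
  simp_rw [integral_const_mul, ← mul_expect, ← mul_sub]
  calc |∑ t, c t * (𝔼 i, f t (r i) - ∫ x, f t x ∂𝒟)|
      ≤ ∑ t, |c t * (𝔼 i, f t (r i) - ∫ x, f t x ∂𝒟)| := abs_sum_le_sum_abs _ _
    _ ≤ ∑ _t : τ, δ := sum_le_sum fun t _ => by
        rw [abs_mul]
        exact (mul_le_of_le_one_left (abs_nonneg _) (hc t)).trans (hr t)
    _ = Fintype.card τ * δ := by simp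

variable [IsProbabilityMeasure 𝒟]

theorem expUnlikely_exists_not_of_ae {p : 𝓧 → Prop} (hp : ∀ᵐ x ∂𝒟, p x) :
    ExpUnlikely (noiseLaw ι 𝒟) fun _ => {r | ∃ q, ¬p (r q)} := by
  refine expUnlikely_of_measure_eq_zero fun n => ?_
  have (q : ι × Fin n) : ∀ᵐ r ∂noiseLaw ι 𝒟 n, p (r q) :=
    (measurePreserving_eval _ q).quasiMeasurePreserving.ae hp
  simpa using ae_iff.1 (ae_all_iff.2 this)

theorem expUnlikely_lt_abs_expect_sub_integral {f : 𝓧 → ℝ} (hf : Measurable f)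
    (hf₁ : ∀ᵐ x ∂𝒟, |f x| ≤ 1) {δ : ℝ} (hδ : 0 < δ) (a : ι) :
    ExpUnlikely (noiseLaw ι 𝒟) fun _ => {r | δ < |𝔼 i, f (r (a, i)) - ∫ x, f x ∂𝒟|} := by
  refine ⟨δ ^ 2 / 2, by positivity, IsBigO.of_bound 2 ?_⟩
  filter_upwards [eventually_gt_atTop 0] with n hn
  have := Fin.pos_iff_nonempty.1 hn
  have hmp (q : ι × Fin n) := measurePreserving_eval (fun _ : ι × Fin n => 𝒟) q
  have hindep : iIndepFun (fun (i : Fin n) (r : ι × Fin n → 𝓧) => f (r (a, i))) (noiseLaw ι 𝒟 n) :=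
    (iIndepFun_pi (Ω := fun _ : ι × Fin n => 𝓧) fun _ => hf.aemeasurable).precomp
      (Prod.mk_right_injective a)
  have hmean (i : Fin n) : ∫ r, f (r (a, i)) ∂noiseLaw ι 𝒟 n = ∫ x, f x ∂𝒟 :=
    integral_comp_eval hf.aestronglyMeasurable
  simpa [expect_sub_distrib, hmean, abs_of_nonneg measureReal_nonneg] using
    measureReal_lt_abs_expect_sub_integral_le hindep
      (fun i => (hf.comp (measurable_pi_apply (a, i))).aemeasurable)
      (fun i => (hmp (a, i)).quasiMeasurePreserving.ae hf₁) hδ.le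

theorem expUnlikely_exists_lt_abs_expect_sum_sub_integral {τ : Type*} [Fintype τ] {f : τ → 𝓧 → ℝ}
    (hf : ∀ t, Measurable (f t)) (hf₁ : ∀ t, ∀ᵐ x ∂𝒟, |f t x| ≤ 1) {δ : ℝ} (hδ : 0 < δ) (a : ι) :
    ExpUnlikely (noiseLaw ι 𝒟) fun _ => {r | ∃ c : τ → ℝ, (∀ t, |c t| ≤ 1) ∧
      δ < |𝔼 i, ∑ t, c t * f t (r (a, i)) - ∫ x, ∑ t, c t * f t x ∂𝒟|} := by
  set δ' := δ / (Fintype.card τ + 1)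
  have hδ' : 0 < δ' := by positivity
  refine (ExpUnlikely.iUnion fun t =>
    expUnlikely_lt_abs_expect_sub_integral (hf t) (hf₁ t) hδ' a).mono (.of_forall fun n => ?_)
  rintro r ⟨c, hc, hr⟩
  rw [Set.mem_iUnion]
  by_contra! hsmall
  refine hr.not_ge ((abs_expect_sum_sub_integral_sum_le
    (fun t => .of_bound (hf t).aestronglyMeasurable 1 (hf₁ t)) hc
    fun t => not_lt.1 (hsmall t)).trans ?_)
  calc Fintype.card τ * δ' ≤ (Fintype.card τ + 1) * δ' := by gcongr; linarith
    _ = δ := mul_div_cancel₀ _ (by positivity)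

end Concentration

/-! ### Directional moments of the noise -/

theorem abs_empVar_sub_variance_le {𝓧 κ : Type*} [MeasurableSpace 𝓧] [Fintype κ] {𝒟 : Measure 𝓧}
    [IsProbabilityMeasure 𝒟] {f : 𝓧 → ℝ} (hf : Measurable f) (hf₁ : ∀ᵐ x ∂𝒟, |f x| ≤ 1)
    {r : κ → 𝓧} (hr : ∀ k, |f (r k)| ≤ 1) {δ : ℝ} (hmean : |𝔼 k, f (r k) - ∫ x, f x ∂𝒟| ≤ δ)
    (hsq : |𝔼 k, f (r k) ^ 2 - ∫ x, f x ^ 2 ∂𝒟| ≤ δ) :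
    |empVar (fun k => f (r k)) - Var[f; 𝒟]| ≤ 3 * δ := by
  have hemp : |𝔼 k, f (r k)| ≤ 1 := by
    rcases isEmpty_or_nonempty κ with _ | _
    · simp
    · exact (abs_expect_le _ _).trans (expect_le univ_nonempty fun k _ => hr k)
  have hint : |∫ x, f x ∂𝒟| ≤ 1 := by
    simpa using norm_integral_le_of_norm_le_const (f := f) hf₁
  have hsqs : |(𝔼 k, f (r k)) ^ 2 - (∫ x, f x ∂𝒟) ^ 2| ≤ 2 * δ := by
    rw [sq_sub_sq, abs_mul]
    exact mul_le_mul ((abs_add_le _ _).trans (by linarith)) hmean (abs_nonneg _) zero_le_two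
  rw [empVar_eq_expect_sq_sub_sq_expect, variance_eq_sub (.of_bound hf.aestronglyMeasurable 1 hf₁),
    sub_sub_sub_comm]
  exact (abs_sub _ _).trans (by simp only [Pi.pow_apply]; linarith)

/-- In every direction, the empirical mean and variance of the sample `r` agree up to `η` with those
of the distribution `𝒟`. -/
def HasDirectionalMomentsWithin {κ E : Type*} [Fintype κ] [NormedAddCommGroup E]
    [InnerProductSpace ℝ E] [MeasurableSpace E] (𝒟 : Measure E) (η : ℝ) (r : κ → E) : Prop :=
  ∀ p, ‖p‖ = 1 → |𝔼 k, ⟪r k, p⟫ - ∫ x, ⟪x, p⟫ ∂𝒟| ≤ η ∧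
    |empVar (fun k => ⟪r k, p⟫) - Var[fun x => ⟪x, p⟫; 𝒟]| ≤ η

theorem abs_inner_le_one {E : Type*} [NormedAddCommGroup E] [InnerProductSpace ℝ E] {x p : E}
    (hx : ‖x‖ ≤ 1) (hp : ‖p‖ = 1) : |⟪x, p⟫| ≤ 1 := by
  simpa [hp] using (abs_real_inner_le_norm x p).trans
    (mul_le_of_le_one_left (norm_nonneg p) hx)

-- Expanding `⟪x, p⟫` and `⟪x, p⟫ ^ 2` in coordinates reduces all directions `p` at once to the
-- finitely many functions `x j` and `x j * x k`.
theorem expUnlikely_not_hasDirectionalMomentsWithin {m : ℕ} {ι : Type*} [Fintype ι]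
    {𝒟 : Measure (EuclideanSpace ℝ (Fin m))} [IsProbabilityMeasure 𝒟]
    (hball : ∀ᵐ x ∂𝒟, ‖x‖ ≤ 1) {η : ℝ} (hη : 0 < η) (a : ι) :
    ExpUnlikely (noiseLaw ι 𝒟) fun _ =>
      {r | ¬HasDirectionalMomentsWithin 𝒟 η fun i => r (a, i)} := by
  have hcoord {x : EuclideanSpace ℝ (Fin m)} (hx : ‖x‖ ≤ 1) (j : Fin m) : |x j| ≤ 1 :=
    (PiLp.norm_apply_le x j).trans hx
  have hfst := expUnlikely_exists_lt_abs_expect_sum_sub_integral (𝒟 := 𝒟)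
    (f := fun (j : Fin m) x => x j) (fun j => by fun_prop)
    (fun j => hball.mono fun x hx => hcoord hx j) (by positivity : 0 < η / 3) a
  have hsnd := expUnlikely_exists_lt_abs_expect_sum_sub_integral (𝒟 := 𝒟)
    (f := fun (t : Fin m × Fin m) x => x t.1 * x t.2) (fun j => by fun_prop)
    (fun t => hball.mono fun x hx => by
      simpa [abs_mul] using mul_le_one₀ (hcoord hx t.1) (abs_nonneg _) (hcoord hx t.2))
    (by positivity : 0 < η / 3) a
  refine (((expUnlikely_exists_not_of_ae hball).union hfst).union hsnd).mono (.of_forall ?_)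
  intro n r hr
  contrapose! hr
  simp only [Set.mem_union, Set.mem_ofPred_eq, not_or, not_exists, not_not, not_and, not_lt] at hr ⊢
  obtain ⟨⟨hnorm, hfst⟩, hsnd⟩ := hr
  intro p hp
  have hinner (x : EuclideanSpace ℝ (Fin m)) : ⟪x, p⟫ = ∑ j, p j * x j := by
    simp [PiLp.inner_apply]
  have hinner_sq (x : EuclideanSpace ℝ (Fin m)) :
      ⟪x, p⟫ ^ 2 = ∑ t : Fin m × Fin m, p t.1 * p t.2 * (x t.1 * x t.2) := by
    rw [hinner, sq, sum_mul_sum, ← univ_product_univ, sum_product]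
    exact sum_congr rfl fun _ _ => sum_congr rfl fun _ _ => by ring
  have hmean : |𝔼 i, ⟪r (a, i), p⟫ - ∫ x, ⟪x, p⟫ ∂𝒟| ≤ η / 3 := by
    simpa only [hinner] using hfst (fun j => p j) (hcoord hp.le)
  have hsq : |𝔼 i, ⟪r (a, i), p⟫ ^ 2 - ∫ x, ⟪x, p⟫ ^ 2 ∂𝒟| ≤ η / 3 := by
    simpa only [hinner_sq] using hsnd (fun t => p t.1 * p t.2) fun t => by
      simpa [abs_mul] using mul_le_one₀ (hcoord hp.le t.1) (abs_nonneg _) (hcoord hp.le t.2)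
  refine ⟨hmean.trans (by linarith), ?_⟩
  have := abs_empVar_sub_variance_le (f := fun x => ⟪x, p⟫) (by fun_prop)
    (hball.mono fun x hx => abs_inner_le_one hx hp) (fun i => abs_inner_le_one (hnorm (a, i)) hp)
    hmean hsq
  linarith

/-! ### Geometry of the two clusters -/

section Clusters

variable {E : Type*} [NormedAddCommGroup E] [InnerProductSpace ℝ E]

theorem empVar_inner_add_fin_two {κ : Type*} [Fintype κ] [Nonempty κ] (γ : Fin 2 → E)
    (r : Fin 2 × κ → E) (p : E) :
    empVar (fun q => ⟪γ q.1 + r q, p⟫) =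
      (empVar (fun k => ⟪r (0, k), p⟫) + empVar (fun k => ⟪r (1, k), p⟫)) / 2 +
        ((⟪γ 0 - γ 1, p⟫ + (𝔼 k, ⟪r (0, k), p⟫ - 𝔼 k, ⟪r (1, k), p⟫)) / 2) ^ 2 := by
  simp only [inner_add_left, inner_sub_left]
  rw [empVar_prod, empVar_fin_two]
  simp only [empVar_const_add, expect_add_distrib, Fintype.expect_const]
  rw [Fintype.expect_eq_sum_div_card, Fin.sum_univ_two, Fintype.card_fin]
  push_cast
  ring

variable {γ : Fin 2 → E}

theorem IsPrincipalDirection.two_lt_abs_inner [MeasurableSpace E] {κ : Type*} [Fintype κ]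
    [Nonempty κ] {𝒟 : Measure E} {η : ℝ} {r : Fin 2 × κ → E} {z : E}
    (hz : IsPrincipalDirection (fun q : Fin 2 × κ => γ q.1 + r q) z)
    (hvar : ∀ p, ‖p‖ = 1 → Var[fun x => ⟪x, p⟫; 𝒟] ≤
      Var[fun x => ⟪x, ‖γ 0 - γ 1‖⁻¹ • (γ 0 - γ 1)⟫; 𝒟])
    (hη : 0 < η) (hγ : 2 + 6 * η ≤ ‖γ 0 - γ 1‖)
    (hr : ∀ a, HasDirectionalMomentsWithin 𝒟 η fun k => r (a, k)) :
    2 < |⟪γ 0 - γ 1, z⟫| := by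
  set w := ‖γ 0 - γ 1‖⁻¹ • (γ 0 - γ 1) with hw_def
  have hpos : 0 < ‖γ 0 - γ 1‖ := by linarith
  have hw : ‖w‖ = 1 := by rw [hw_def, norm_smul, norm_inv, norm_norm, inv_mul_cancel₀ hpos.ne']
  have hγw : ⟪γ 0 - γ 1, w⟫ = ‖γ 0 - γ 1‖ := by
    rw [inner_smul_right, real_inner_self_eq_norm_sq]
    field_simp
  have hle := hz.2 w hw
  rw [empVar_inner_add_fin_two, empVar_inner_add_fin_two, hγw] at hle
  obtain ⟨hmean_w₀, hvar_w₀⟩ := hr 0 w hw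
  obtain ⟨hmean_w₁, hvar_w₁⟩ := hr 1 w hw
  obtain ⟨hmean_z₀, hvar_z₀⟩ := hr 0 z hz.1
  obtain ⟨hmean_z₁, hvar_z₁⟩ := hr 1 z hz.1
  rw [abs_le] at hmean_w₀ hmean_w₁ hmean_z₀ hmean_z₁ hvar_w₀ hvar_w₁ hvar_z₀ hvar_z₁
  by_contra! hd
  have hw_sq := pow_le_pow_left₀ (n := 2) (by linarith) (show (2 + 4 * η) / 2 ≤
    (‖γ 0 - γ 1‖ + (𝔼 k, ⟪r (0, k), w⟫ - 𝔼 k, ⟪r (1, k), w⟫)) / 2 by linarith)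
  have hz_sq : ((⟪γ 0 - γ 1, z⟫ + (𝔼 k, ⟪r (0, k), z⟫ - 𝔼 k, ⟪r (1, k), z⟫)) / 2) ^ 2 ≤
      ((2 + 2 * η) / 2) ^ 2 := sq_le_sq' (by linarith [abs_le.1 hd]) (by linarith [abs_le.1 hd])
  nlinarith [hvar z hz.1, pow_pos hη 2]

theorem planted_isThresholdPart {n : ℕ} {r : Fin 2 × Fin n → E} (hr : ∀ q, ‖r q‖ ≤ 1) {z : E}
    (hz : ‖z‖ = 1) (hγ : 2 < |⟪γ 0 - γ 1, z⟫|) :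
    IsThresholdPart (fun q => ⟪γ q.1 + r q, z⟫) (planted n) := by
  have hnoise (q) : |⟪r q, z⟫| ≤ 1 := abs_inner_le_one (hr q) hz
  simp_rw [abs_le] at hnoise
  rw [inner_sub_left] at hγ
  have hmem (q : Fin 2 × Fin n) : q ∈ planted n ↔ q.1 = 0 := by simp [planted]
  have hnot (q : Fin 2 × Fin n) (hq : q ∉ planted n) : q.1 = 1 := by
    rw [hmem] at hq; omega
  rcases lt_abs.1 hγ with h | h
  · refine isThresholdPart_of_separated_above (θ := (⟪γ 0, z⟫ + ⟪γ 1, z⟫) / 2) (fun q hq => ?_)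
      fun q hq => ?_
    · rw [(hmem q).1 hq, inner_add_left]
      linarith [hnoise q]
    · rw [hnot q hq, inner_add_left]
      linarith [hnoise q]
  · refine isThresholdPart_of_separated_below (θ := (⟪γ 0, z⟫ + ⟪γ 1, z⟫) / 2) (fun q hq => ?_)
      fun q hq => ?_
    · rw [(hmem q).1 hq, inner_add_left]
      linarith [hnoise q]
    · rw [hnot q hq, inner_add_left]
      linarith [hnoise q]

end Clusters

/-! ### Recovery -/

theorem exists_ne_of_two_lt_norm_sub {E κ : Type*} [NormedAddCommGroup E] [Nonempty κ]
    {γ : Fin 2 → E} {r : Fin 2 × κ → E} (hγ : 2 < ‖γ 0 - γ 1‖) (hr : ∀ q, ‖r q‖ ≤ 1) :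
    ∃ q q' : Fin 2 × κ, γ q.1 + r q ≠ γ q'.1 + r q' := by
  obtain ⟨k⟩ := ‹Nonempty κ›
  refine ⟨(0, k), (1, k), fun h => hγ.not_ge ?_⟩
  rw [sub_eq_sub_iff_add_eq_add.2 (h.trans (add_comm _ _))]
  linarith [norm_sub_le (r (1, k)) (r (0, k)), hr (0, k), hr (1, k)]

theorem spectralRecovers_of_forall_twoMeansObj_lt {m n : ℕ} [NeZero n]
    {γ : Fin 2 → EuclideanSpace ℝ (Fin m)} {𝒟 : Measure (EuclideanSpace ℝ (Fin m))} {η : ℝ}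
    {r : Fin 2 × Fin n → EuclideanSpace ℝ (Fin m)}
    (hvar : ∀ p, ‖p‖ = 1 → Var[fun x => ⟪x, p⟫; 𝒟] ≤
      Var[fun x => ⟪x, ‖γ 0 - γ 1‖⁻¹ • (γ 0 - γ 1)⟫; 𝒟])
    (hη : 0 < η) (hγ : 2 + 6 * η ≤ ‖γ 0 - γ 1‖) (hr : ∀ q, ‖r q‖ ≤ 1)
    (hmoments : ∀ a, HasDirectionalMomentsWithin 𝒟 η fun k => r (a, k))
    (hkmeans : ∀ T : Finset (Fin 2 × Fin n), T ≠ planted n → T ≠ (planted n)ᶜ →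
      twoMeansObj (fun q => γ q.1 + r q) (planted n) < twoMeansObj (fun q => γ q.1 + r q) T) :
    SpectralRecovers n fun q => γ q.1 + r q := by
  refine fun y hy => ⟨?_, fun θ => hkmeans _⟩
  obtain ⟨z, hz, l, hl, hyz⟩ := exists_isPrincipalDirection_of_leadingEigenvector
    (exists_ne_of_two_lt_norm_sub (by linarith) hr) hy
  have hthreshold := planted_isThresholdPart hr hz.1 (hz.two_lt_abs_inner hvar hη hγ hmoments)
  exact hthreshold.of_mul_eq_sub hl fun q => (hyz q).trans (inner_sub_left _ _ _)

theorem variance_inner_eq_of_norm_eq {E : Type*} [NormedAddCommGroup E] [InnerProductSpace ℝ E]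
    [MeasurableSpace E] [BorelSpace E] [SecondCountableTopology E] {𝒟 : Measure E}
    (hrot : ∀ T : E ≃ₗᵢ[ℝ] E, 𝒟.map T = 𝒟) {p q : E} (h : ‖p‖ = ‖q‖) :
    Var[fun x => ⟪x, p⟫; 𝒟] = Var[fun x => ⟪x, q⟫; 𝒟] := by
  set T := (ℝ ∙ (q - p))ᗮ.reflection
  have hT : T q = p := Submodule.reflection_sub h.symm
  have hinner : (fun x => ⟪x, p⟫) ∘ T = fun x => ⟪x, q⟫ := by
    ext x
    rw [Function.comp_apply, ← hT, T.inner_map_map]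
  conv_lhs => rw [← hrot T]
  rw [variance_map (by fun_prop) (by fun_prop), hinner]

theorem spectral_kmeans_recovers_planted_clusters_general {m : ℕ}
    {γ : Fin 2 → EuclideanSpace ℝ (Fin m)} (hγ : 2 < ‖γ 0 - γ 1‖)
    {𝒟 : Measure (EuclideanSpace ℝ (Fin m))} [IsProbabilityMeasure 𝒟]
    (hvar : ∀ p, ‖p‖ = 1 → Var[fun x => ⟪x, p⟫; 𝒟] ≤
      Var[fun x => ⟪x, ‖γ 0 - γ 1‖⁻¹ • (γ 0 - γ 1)⟫; 𝒟])
    (hball : ∀ᵐ x ∂𝒟, ‖x‖ ≤ 1)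
    (hkmeans : HoldsWithExpHighProb (noiseLaw (Fin 2) 𝒟) fun n =>
      {r | ∀ T : Finset (Fin 2 × Fin n), T ≠ planted n → T ≠ (planted n)ᶜ →
        twoMeansObj (fun q => γ q.1 + r q) (planted n) <
          twoMeansObj (fun q => γ q.1 + r q) T}) :
    HoldsWithExpHighProb (noiseLaw (Fin 2) 𝒟) fun n =>
      {r | SpectralRecovers n fun q => γ q.1 + r q} := by
  set η := (‖γ 0 - γ 1‖ - 2) / 6 with hη_def
  have hη : 0 < η := div_pos (sub_pos.2 hγ) (by norm_num)
  have hmoments (a : Fin 2) := expUnlikely_not_hasDirectionalMomentsWithin hball hη a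
  refine hkmeans.of_subset_union ((expUnlikely_exists_not_of_ae hball).union (.iUnion hmoments)) ?_
  filter_upwards [eventually_ne_atTop 0] with n hn r hr
  have := NeZero.mk hn
  by_contra! hbad
  simp only [Set.mem_union, Set.mem_iUnion, Set.mem_ofPred_eq, not_or, not_exists, not_not,
    not_lt] at hbad
  obtain ⟨hfail, hnorm, hmom⟩ := hbad
  exact hfail (spectralRecovers_of_forall_twoMeansObj_lt hvar hη (by linarith) hnorm hmom hr)

/-- (Theorem 4.1 of the paper.) Under the two-cluster stochastic ball
model with `Δ > 2`: if minimizing the 2-means objective recovers the planted clusters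
with probability `1 − e^{−Ω(n)}`, then spectral k-means clustering also recovers the
planted clusters with probability `1 − e^{−Ω(n)}`. -/
theorem spectral_kmeans_recovers_planted_clusters
    (m : ℕ) (γ : Fin 2 → EuclideanSpace ℝ (Fin m))
    (hΔ : 2 < ‖γ 0 - γ 1‖)
    (𝒟 : Measure (EuclideanSpace ℝ (Fin m))) [IsProbabilityMeasure 𝒟]
    (hrot : ∀ T : EuclideanSpace ℝ (Fin m) ≃ₗᵢ[ℝ] EuclideanSpace ℝ (Fin m),
      𝒟.map T = 𝒟)
    (hball : 𝒟 {r | ‖r‖ ≤ 1} = 1)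
    (hkmeans : ∃ c' : ℝ, 0 < c' ∧ ∃ n₀' : ℕ, ∀ n : ℕ, n₀' ≤ n →
      ENNReal.ofReal (1 - Real.exp (-c' * n)) ≤
        (Measure.pi fun _ : Fin 2 × Fin n => 𝒟)
          {r | ∀ T : Finset (Fin 2 × Fin n), T ≠ planted n → T ≠ (planted n)ᶜ →
            twoMeansObj (fun p : Fin 2 × Fin n => γ p.1 + r p) (planted n)
              < twoMeansObj (fun p : Fin 2 × Fin n => γ p.1 + r p) T}) :
    ∃ c : ℝ, 0 < c ∧ ∃ n₀ : ℕ, ∀ n : ℕ, n₀ ≤ n →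
      ENNReal.ofReal (1 - Real.exp (-c * n)) ≤
        (Measure.pi fun _ : Fin 2 × Fin n => 𝒟)
          {r | SpectralRecovers n (fun p : Fin 2 × Fin n => γ p.1 + r p)} := by
  exact spectral_kmeans_recovers_planted_clusters_general hΔ
    (fun p hp => (variance_inner_eq_of_norm_eq hrot (hp.trans
      (norm_smul_inv_norm (𝕜 := ℝ) (norm_pos_iff.1 (by linarith))).symm)).le)
    ((mem_ae_iff_prob_eq_one (measurableSet_le measurable_norm measurable_const)).2 hball) hkmeans
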